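/- Let ε ≥ δ > 0. The set of almost chaotic (ε,δ)-Delone sets in ℝⁿ is residual (contains a countable intersection of open dense sets) in the space Del_{ε,δ} with the local rubber topology. -/

import Mathlib

open Metric Pointwise

/-- `S` is `δ`-separated. -/
def IsSeparated' {n : ℕ} (δ : ℝ) (S : Set (EuclideanSpace ℝ (Fin n))) : Prop :=
  ∀ x ∈ S, ∀ y ∈ S, x ≠ y → δ ≤ dist x y

/-- `S` is an `(ε,δ)`-Delone subset of ℝⁿ: `ε`-relatively dense and `δ`-separated. -/
def IsDelone {n : ℕ} (ε δ : ℝ) (S : Set (EuclideanSpace ℝ (Fin n))) : Prop :=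
  (∀ x : EuclideanSpace ℝ (Fin n), ∃ y ∈ S, dist x y ≤ ε) ∧ IsSeparated' δ S

/-- The space of `(ε,δ)`-Delone subsets of ℝⁿ. -/
def Del (n : ℕ) (ε δ : ℝ) : Set (Set (EuclideanSpace ℝ (Fin n))) :=
  {S | IsDelone ε δ S}

/-- The basic entourage `N_r` of the local rubber uniformity. -/
def Nrel (n : ℕ) (r : ℝ) (S S' : Set (EuclideanSpace ℝ (Fin n))) : Prop :=
  S ∩ ball (0 : EuclideanSpace ℝ (Fin n)) r ⊆ S' + ball (0 : EuclideanSpace ℝ (Fin n)) (1 / r) ∧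
  S' ∩ ball (0 : EuclideanSpace ℝ (Fin n)) r ⊆ S + ball (0 : EuclideanSpace ℝ (Fin n)) (1 / r)

/-- The translate `S - v` of `S`. -/
def tr {n : ℕ} (v : EuclideanSpace ℝ (Fin n)) (S : Set (EuclideanSpace ℝ (Fin n))) :
    Set (EuclideanSpace ℝ (Fin n)) :=
  (fun x => x - v) '' S

/-- `S` is aperiodic: no nonzero translation fixes it. -/
def IsAperiodicSet {n : ℕ} (S : Set (EuclideanSpace ℝ (Fin n))) : Prop :=
  ∀ v : EuclideanSpace ℝ (Fin n), v ≠ 0 → tr v S ≠ S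

/-- `S` is periodic: its translation symmetry group is a cocompact lattice, i.e. it contains
`n` linearly independent periods. -/
def IsPeriodicSet {n : ℕ} (S : Set (EuclideanSpace ℝ (Fin n))) : Prop :=
  ∃ v : Fin n → EuclideanSpace ℝ (Fin n), LinearIndependent ℝ v ∧ ∀ i, tr (v i) S = S

/-- `S'` belongs to the hull (closure of the translation orbit) of `S`:
every basic rubber neighbourhood of `S'` meets the orbit of `S`. -/
def InHull {n : ℕ} (S S' : Set (EuclideanSpace ℝ (Fin n))) : Prop :=
  ∀ r : ℝ, 0 < r → ∃ v : EuclideanSpace ℝ (Fin n), Nrel n r (tr v S) S'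

/-- `S` is almost chaotic: periodic Delone sets are dense in the hull of `S`. -/
def IsAlmostChaotic {n : ℕ} (ε δ : ℝ) (S : Set (EuclideanSpace ℝ (Fin n))) : Prop :=
  ∀ S' ∈ Del n ε δ, InHull S S' → ∀ r : ℝ, 0 < r →
    ∃ P ∈ Del n ε δ, IsPeriodicSet P ∧ InHull S P ∧ Nrel n r S' P

/-- `F` is an open subset of `Del n ε δ` in the local rubber topology. -/
def IsOpenInDel (n : ℕ) (ε δ : ℝ) (F : Set (Set (EuclideanSpace ℝ (Fin n)))) : Prop :=
  ∀ S ∈ F, ∃ r : ℝ, 0 < r ∧ ∀ S' ∈ Del n ε δ, Nrel n r S S' → S' ∈ F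

/-- `F` is dense in `Del n ε δ` in the local rubber topology. -/
def IsDenseInDel (n : ℕ) (ε δ : ℝ) (F : Set (Set (EuclideanSpace ℝ (Fin n)))) : Prop :=
  ∀ S ∈ Del n ε δ, ∀ r : ℝ, 0 < r → ∃ S' ∈ F, Nrel n r S S'

lemma nrel_iff {n : ℕ} {r : ℝ} {S S' : Set (EuclideanSpace ℝ (Fin n))} :
    Nrel n r S S' ↔ (∀ x ∈ S, ‖x‖ < r → ∃ y ∈ S', dist x y < 1 / r) ∧
      (∀ x ∈ S', ‖x‖ < r → ∃ y ∈ S, dist x y < 1 / r) := by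
  have key : ∀ A B : Set (EuclideanSpace ℝ (Fin n)),
      A ∩ ball (0 : EuclideanSpace ℝ (Fin n)) r ⊆ B + ball (0 : EuclideanSpace ℝ (Fin n)) (1 / r) ↔
      (∀ x ∈ A, ‖x‖ < r → ∃ y ∈ B, dist x y < 1 / r) := by
    intro A B
    constructor
    · intro h x hx hr
      obtain ⟨y, hy, z, hz, rfl⟩ := h ⟨hx, by simpa using hr⟩
      refine ⟨y, hy, ?_⟩
      simpa [dist_eq_norm] using hz
    · rintro h x ⟨hx, hr⟩
      obtain ⟨y, hy, hd⟩ := h x hx (by simpa using hr)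
      refine ⟨y, hy, x - y, ?_, by simp⟩
      simpa [dist_eq_norm] using hd
  unfold Nrel
  rw [key, key]

lemma Nrel.symm' {n : ℕ} {r : ℝ} {S S' : Set (EuclideanSpace ℝ (Fin n))}
    (h : Nrel n r S S') : Nrel n r S' S := ⟨h.2, h.1⟩

lemma nrel_of_agree {n : ℕ} {r : ℝ} (hr : 0 < r) {S S' : Set (EuclideanSpace ℝ (Fin n))}
    (h : ∀ x, ‖x‖ < r → (x ∈ S ↔ x ∈ S')) : Nrel n r S S' := by
  rw [nrel_iff]
  exact ⟨fun x hx hr' => ⟨x, (h x hr').1 hx, by simpa using hr⟩,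
    fun x hx hr' => ⟨x, (h x hr').2 hx, by simpa using hr⟩⟩

lemma nrel_refl {n : ℕ} {r : ℝ} (hr : 0 < r) (S : Set (EuclideanSpace ℝ (Fin n))) :
    Nrel n r S S := nrel_of_agree hr (fun _ _ => Iff.rfl)

lemma Nrel.mono' {n : ℕ} {r ρ : ℝ} (hr : 0 < r) (hρ : r ≤ ρ)
    {S S' : Set (EuclideanSpace ℝ (Fin n))} (h : Nrel n ρ S S') : Nrel n r S S' := by
  rw [nrel_iff] at h ⊢
  have h1 : 1 / ρ ≤ 1 / r := one_div_le_one_div_of_le hr hρ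
  constructor
  · intro x hx hxr
    obtain ⟨y, hy, hd⟩ := h.1 x hx (by linarith)
    exact ⟨y, hy, by linarith⟩
  · intro x hx hxr
    obtain ⟨y, hy, hd⟩ := h.2 x hx (by linarith)
    exact ⟨y, hy, by linarith⟩

lemma Nrel.trans' {n : ℕ} {r ρ : ℝ} (hr : 0 < r) (hρ : 2 * r ≤ ρ) (hρ' : 2 ≤ ρ)
    {S S' S'' : Set (EuclideanSpace ℝ (Fin n))} (h : Nrel n ρ S S') (h' : Nrel n ρ S' S'') :
    Nrel n r S S'' := by
  rw [nrel_iff] at h h' ⊢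
  have h1 : 1 / ρ ≤ 1 / (2 * r) := one_div_le_one_div_of_le (by linarith) hρ
  have h2 : 1 / ρ ≤ 1 / 2 := one_div_le_one_div_of_le (by norm_num) hρ'
  have h3 : 1 / (2 * r) + 1 / (2 * r) = 1 / r := by field_simp; norm_num
  have key : ∀ x y : EuclideanSpace ℝ (Fin n), ‖x‖ < r → dist x y < 1 / ρ → ‖y‖ < ρ := by
    intro x y hx hd
    have : ‖y‖ ≤ ‖x‖ + dist x y := by
      rw [dist_eq_norm, norm_sub_rev]
      have := norm_add_le x (y - x)
      simpa using this
    linarith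
  constructor
  · intro x hx hxr
    obtain ⟨y, hy, hd⟩ := h.1 x hx (by linarith)
    obtain ⟨z, hz, hd'⟩ := h'.1 y hy (key x y hxr hd)
    exact ⟨z, hz, by linarith [dist_triangle x y z]⟩
  · intro x hx hxr
    obtain ⟨y, hy, hd⟩ := h'.2 x hx (by linarith)
    obtain ⟨z, hz, hd'⟩ := h.2 y hy (key x y hxr hd)
    exact ⟨z, hz, by linarith [dist_triangle x y z]⟩

lemma mem_tr {n : ℕ} {v x : EuclideanSpace ℝ (Fin n)} {S : Set (EuclideanSpace ℝ (Fin n))} :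
    x ∈ tr v S ↔ x + v ∈ S := by
  unfold tr
  constructor
  · rintro ⟨y, hy, rfl⟩
    simpa using hy
  · intro h
    exact ⟨x + v, h, by simp⟩

lemma Nrel.tr' {n : ℕ} {r ρ : ℝ} (hr : 0 < r) (v : EuclideanSpace ℝ (Fin n)) (hρ : r + ‖v‖ ≤ ρ)
    {S S' : Set (EuclideanSpace ℝ (Fin n))} (h : Nrel n ρ S S') :
    Nrel n r (tr v S) (tr v S') := by
  rw [nrel_iff] at h ⊢
  have h1 : 1 / ρ ≤ 1 / r := one_div_le_one_div_of_le hr (by linarith [norm_nonneg v])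
  constructor
  · intro x hx hxr
    rw [mem_tr] at hx
    obtain ⟨y, hy, hd⟩ := h.1 _ hx (by linarith [norm_add_le x v])
    refine ⟨y - v, by simpa [mem_tr] using hy, ?_⟩
    have : dist x (y - v) = dist (x + v) y := by
      rw [dist_eq_norm, dist_eq_norm]; congr 1; abel
    linarith
  · intro x hx hxr
    rw [mem_tr] at hx
    obtain ⟨y, hy, hd⟩ := h.2 _ hx (by linarith [norm_add_le x v])
    refine ⟨y - v, by simpa [mem_tr] using hy, ?_⟩
    have : dist x (y - v) = dist (x + v) y := by
      rw [dist_eq_norm, dist_eq_norm]; congr 1; abel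
    linarith

/-- Extension of an `L`-invariant separated set to an `L`-invariant Delone set. -/
lemma glue {n : ℕ} {ε δ : ℝ} (hδ : 0 < δ) (hεδ : δ ≤ ε)
    (L : AddSubgroup (EuclideanSpace ℝ (Fin n))) (hL : ∀ l ∈ L, l ≠ 0 → δ ≤ ‖l‖)
    (B Ω : Set (EuclideanSpace ℝ (Fin n)))
    (hB : ∀ l ∈ L, ∀ x ∈ B, x + l ∈ B) (hΩ : ∀ l ∈ L, ∀ x ∈ Ω, x + l ∈ Ω)
    (hsep : IsSeparated' δ B) (hcov : ∀ x, x ∉ Ω → ∃ y ∈ B, dist x y ≤ ε) :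
    ∃ T ∈ Del n ε δ, B ⊆ T ∧ T ⊆ B ∪ Ω ∧ ∀ l ∈ L, ∀ x ∈ T, x + l ∈ T := by
  obtain ⟨T, hBT, hT⟩ := zorn_subset_nonempty
    {T : Set (EuclideanSpace ℝ (Fin n)) | T ⊆ B ∪ Ω ∧ IsSeparated' δ T ∧
      ∀ l ∈ L, ∀ x ∈ T, x + l ∈ T} (by
      intro c hc hchain hne
      refine ⟨⋃₀ c, ⟨?_, ?_, ?_⟩, fun s hs => Set.subset_sUnion_of_mem hs⟩
      · exact Set.sUnion_subset fun s hs => (hc hs).1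
      · rintro x ⟨s, hs, hx⟩ y ⟨t, ht, hy⟩ hxy
        rcases hchain.total hs ht with h | h
        · exact (hc ht).2.1 x (h hx) y hy hxy
        · exact (hc hs).2.1 x hx y (h hy) hxy
      · rintro l hl x ⟨s, hs, hx⟩
        exact ⟨s, hs, (hc hs).2.2 l hl x hx⟩) B ⟨Set.subset_union_left, hsep, hB⟩
  obtain ⟨hT1, hT2, hT3⟩ := hT.prop
  refine ⟨T, ⟨?_, hT2⟩, hBT, hT1, hT3⟩
  intro x
  by_cases hx : x ∈ Ω
  swap
  · obtain ⟨y, hy, hd⟩ := hcov x hx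
    exact ⟨y, hBT hy, hd⟩
  by_contra! hcon
  have hfar : ∀ y ∈ T, ∀ l ∈ L, δ ≤ dist y (x + l) := by
    intro y hy l hl
    have h1 := hcon (y + -l) (hT3 _ (L.neg_mem hl) y hy)
    have : dist y (x + l) = dist x (y + -l) := by
      rw [dist_comm, dist_eq_norm, dist_eq_norm]; congr 1; abel
    linarith
  have hmem : T ∪ {z | ∃ l ∈ L, z = x + l} ∈ {T : Set (EuclideanSpace ℝ (Fin n)) |
      T ⊆ B ∪ Ω ∧ IsSeparated' δ T ∧ ∀ l ∈ L, ∀ x ∈ T, x + l ∈ T} := by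
    refine ⟨?_, ?_, ?_⟩
    · apply Set.union_subset hT1
      rintro _ ⟨l, hl, rfl⟩
      exact Or.inr (hΩ l hl x hx)
    · rintro a (ha | ⟨l, hl, rfl⟩) b (hb | ⟨m, hm, rfl⟩) hab
      · exact hT2 a ha b hb hab
      · exact hfar a ha m hm
      · rw [dist_comm]; exact hfar b hb l hl
      · have := hL (l - m) (L.sub_mem hl hm) (by
          intro h; apply hab; rw [sub_eq_zero.1 h])
        simpa [dist_eq_norm] using this
    · rintro l hl a (ha | ⟨m, hm, rfl⟩)
      · exact Or.inl (hT3 l hl a ha)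
      · exact Or.inr ⟨m + l, L.add_mem hm hl, by abel⟩
  have hxT : x ∈ T := hT.le_of_ge hmem Set.subset_union_left
    (Or.inr ⟨0, L.zero_mem, by simp⟩)
  have := hcon x hxT
  rw [dist_self] at this
  linarith

/-- Placing patches around far away centres, equivariantly. -/
lemma patch {n : ℕ} {ε δ : ℝ} (hδ : 0 < δ) (hεδ : δ ≤ ε)
    (L : AddSubgroup (EuclideanSpace ℝ (Fin n))) (hL : ∀ l ∈ L, l ≠ 0 → δ ≤ ‖l‖)
    {ι : Type} (c : ι → EuclideanSpace ℝ (Fin n)) (A : ι → Set (EuclideanSpace ℝ (Fin n)))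
    (hA : ∀ i, A i ∈ Del n ε δ) (R : ℝ) (hc : ∀ i j, i ≠ j → 2 * R + δ ≤ dist (c i) (c j))
    (hinv : ∀ l ∈ L, ∀ i, ∃ j, c j = c i + l ∧ A j = A i) :
    ∃ T ∈ Del n ε δ, (∀ l ∈ L, ∀ x ∈ T, x + l ∈ T) ∧
      ∀ i x, ‖x‖ < R - ε → (x + c i ∈ T ↔ x ∈ A i) := by
  obtain ⟨T, hT, hBT, hTB, hTL⟩ := glue hδ hεδ L hL
    {z | ∃ i, ∃ s ∈ A i, ‖s‖ < R ∧ z = s + c i} {z | ∀ i, R - ε ≤ dist z (c i)}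
    (by
      rintro l hl _ ⟨i, s, hs, hsR, rfl⟩
      obtain ⟨j, hj, hAj⟩ := hinv l hl i
      exact ⟨j, s, hAj ▸ hs, hsR, by rw [hj]; abel⟩)
    (by
      intro l hl x hx i
      obtain ⟨j, hj, hAj⟩ := hinv (-l) (L.neg_mem hl) i
      have := hx j
      have h2 : dist (x + l) (c i) = dist x (c j) := by
        rw [hj, dist_eq_norm, dist_eq_norm]; congr 1; abel
      linarith)
    (by
      rintro _ ⟨i, s, hs, hsR, rfl⟩ _ ⟨j, t, ht, htR, rfl⟩ hne
      by_cases hij : i = j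
      · subst hij
        rw [dist_add_right]
        exact (hA i).2 s hs t ht (by rintro rfl; exact hne rfl)
      · have h1 := hc i j hij
        have h2 : dist (c i) (c j) ≤ ‖s‖ + dist (s + c i) (t + c j) + ‖t‖ := by
          have a1 : dist (c i) (s + c i) = ‖s‖ := by simp [dist_eq_norm]
          have a2 : dist (t + c j) (c j) = ‖t‖ := by simp [dist_eq_norm]
          have := dist_triangle4 (c i) (s + c i) (t + c j) (c j)
          linarith
        linarith)
    (by
      intro x hx
      simp only [Set.mem_setOf_eq, not_forall, not_le] at hx
      obtain ⟨i, hi⟩ := hx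
      obtain ⟨y, hy, hd⟩ := (hA i).1 (x - c i)
      have h2 : dist x (y + c i) = dist (x - c i) y := by
        rw [dist_eq_norm, dist_eq_norm]; congr 1; abel
      refine ⟨y + c i, ⟨i, y, hy, ?_, rfl⟩, by linarith⟩
      have : ‖y‖ ≤ dist x (c i) + dist (x - c i) y := by
        rw [dist_eq_norm, dist_eq_norm, ← norm_neg (x - c i - y)]
        have := norm_add_le (x - c i) (-(x - c i - y))
        simpa using this
      linarith)
  refine ⟨T, hT, hTL, ?_⟩
  intro i x hx
  constructor
  · intro hxT
    rcases hTB hxT with ⟨j, s, hs, hsR, h⟩ | h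
    · by_cases hij : i = j
      · subst hij
        rwa [add_right_cancel h]
      · exfalso
        have h1 := hc i j hij
        have h2 : dist (c i) (c j) ≤ ‖s‖ + ‖x‖ := by
          have : c i - c j = s - x := by
            have : c i = s + c j - x := by rw [← h]; abel
            rw [this]; abel
          rw [dist_eq_norm, this]
          exact norm_sub_le _ _
        linarith
    · exfalso
      have := h i
      have h2 : dist (x + c i) (c i) = ‖x‖ := by simp [dist_eq_norm]
      linarith
  · intro hxA
    exact hBT ⟨i, x, hxA, by linarith, rfl⟩

/-- Periodic Delone sets are dense. -/
lemma periodic_dense {n : ℕ} {ε δ : ℝ} (hδ : 0 < δ) (hεδ : δ ≤ ε)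
    {S : Set (EuclideanSpace ℝ (Fin n))} (hS : S ∈ Del n ε δ) {r : ℝ} (hr : 0 < r) :
    ∃ P ∈ Del n ε δ, IsPeriodicSet P ∧ Nrel n r S P := by
  set K : ℝ := 2 * (r + ε) + δ with hK
  have hKpos : 0 < K := by linarith
  let L : AddSubgroup (EuclideanSpace ℝ (Fin n)) :=
    { carrier := {x | ∀ i, ∃ z : ℤ, x i = K * z}
      zero_mem' := fun i => ⟨0, by simp⟩
      add_mem' := by
        intro a b ha hb i
        obtain ⟨z, hz⟩ := ha i
        obtain ⟨w, hw⟩ := hb i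
        exact ⟨z + w, by simp [hz, hw, mul_add]⟩
      neg_mem' := by
        intro a ha i
        obtain ⟨z, hz⟩ := ha i
        exact ⟨-z, by simp [hz]⟩ }
  have hLmem : ∀ x, x ∈ L ↔ ∀ i, ∃ z : ℤ, x i = K * z := fun x => Iff.rfl
  have hLK : ∀ l ∈ L, l ≠ 0 → K ≤ ‖l‖ := by
    intro l hl hne
    have : ∃ i, l i ≠ 0 := by
      by_contra! h
      exact hne (by ext i; simpa using h i)
    obtain ⟨i, hi⟩ := this
    obtain ⟨z, hz⟩ := (hLmem l).1 hl i
    have hz0 : z ≠ 0 := by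
      rintro rfl
      exact hi (by simp [hz])
    have h1 : (1 : ℝ) ≤ |(z : ℝ)| := by
      exact_mod_cast Int.one_le_abs hz0
    have h2 : ‖l i‖ ≤ ‖l‖ := PiLp.norm_apply_le l i
    rw [hz, Real.norm_eq_abs, abs_mul, abs_of_pos hKpos] at h2
    nlinarith
  obtain ⟨T, hT, hTL, hTA⟩ := patch hδ hεδ L (fun l hl h => by linarith [hLK l hl h])
    (fun l : L => (l : EuclideanSpace ℝ (Fin n))) (fun _ => S) (fun _ => hS) (r + ε)
    (by
      intro i j hij
      rw [dist_eq_norm]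
      exact hLK _ (L.sub_mem i.2 j.2) (fun h => hij (Subtype.ext (sub_eq_zero.1 h))))
    (by
      intro l hl i
      exact ⟨i + ⟨l, hl⟩, by simp, rfl⟩)
  refine ⟨T, hT, ?_, ?_⟩
  · have hmem : ∀ i : Fin n, EuclideanSpace.single i K ∈ L := by
      intro i
      rw [hLmem]
      intro j
      by_cases h : j = i
      · exact ⟨1, by simp [h]⟩
      · exact ⟨0, by simp [h]⟩
    refine ⟨fun i => EuclideanSpace.single i K, ?_, ?_⟩
    · rw [Fintype.linearIndependent_iff]
      intro g hg i
      have := congrArg (fun x : EuclideanSpace ℝ (Fin n) => x i) hg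
      simp [Pi.single_apply, hKpos.ne'] at this
      exact this
    · intro i
      ext x
      rw [mem_tr]
      constructor
      · intro h
        have := hTL _ (L.neg_mem (hmem i)) _ h
        simpa using this
      · exact hTL _ (hmem i) x
  · apply nrel_of_agree hr
    intro x hx
    have := hTA 0 x (by linarith)
    simpa using this.symm

/-- A finite net at each scale. -/
lemma finite_net {n : ℕ} (D : Set (Set (EuclideanSpace ℝ (Fin n)))) {m : ℝ} (hm : 0 < m) :
    ∃ C ⊆ D, C.Finite ∧ ∀ P ∈ D, ∃ P' ∈ C, Nrel n m P' P := by
  obtain ⟨t, ht, htc⟩ := Metric.totallyBounded_iff.1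
    ((isCompact_closedBall (0 : EuclideanSpace ℝ (Fin n)) m).totallyBounded)
    (1 / (2 * m)) (by positivity)
  have h3 : 1 / (2 * m) + 1 / (2 * m) = 1 / m := by field_simp; norm_num
  let Φ : Set (EuclideanSpace ℝ (Fin n)) → Set (EuclideanSpace ℝ (Fin n)) :=
    fun P => {y ∈ t | ∃ x ∈ P, dist x y < 1 / (2 * m)}
  obtain ⟨C, hCD, hC⟩ := Set.exists_subset_bijOn D Φ
  refine ⟨C, hCD, ?_, ?_⟩
  · apply Set.Finite.of_finite_image _ hC.injOn
    apply ht.finite_subsets.subset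
    rintro _ ⟨P, hP, rfl⟩
    exact fun y hy => hy.1
  · have key : ∀ A B, Φ A = Φ B → ∀ x ∈ A, ‖x‖ < m → ∃ y ∈ B, dist x y < 1 / m := by
      intro A B hAB x hx hxm
      have := htc (show x ∈ closedBall 0 m by simpa using hxm.le)
      simp only [Set.mem_iUnion, mem_ball] at this
      obtain ⟨y, hy, hd⟩ := this
      have hyA : y ∈ Φ A := ⟨hy, x, hx, hd⟩
      rw [hAB] at hyA
      obtain ⟨_, z, hz, hdz⟩ := hyA
      refine ⟨z, hz, ?_⟩
      have := dist_triangle_right x z y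
      linarith
    intro P hP
    obtain ⟨P', hP', h⟩ := hC.surjOn (Set.mem_image_of_mem Φ hP)
    exact ⟨P', hP', nrel_iff.2 ⟨key _ _ h, key _ _ h.symm⟩⟩

/-- The Delone sets some translate of which is (stably) `m`-close to `C`. -/
def nearOrbit (n : ℕ) (ε δ m : ℝ) (C : Set (EuclideanSpace ℝ (Fin n))) :
    Set (Set (EuclideanSpace ℝ (Fin n))) :=
  {S | S ∈ Del n ε δ ∧ ∃ v : EuclideanSpace ℝ (Fin n), ∃ ρ : ℝ, 0 < ρ ∧
    ∀ S' ∈ Del n ε δ, Nrel n ρ S S' → Nrel n m (tr v S') C}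

lemma nearOrbit_open (n : ℕ) (ε δ m : ℝ) (C : Set (EuclideanSpace ℝ (Fin n))) :
    IsOpenInDel n ε δ (nearOrbit n ε δ m C) := by
  rintro S ⟨hS, v, ρ, hρ, h⟩
  refine ⟨2 * ρ + 2, by linarith, fun S' hS' hSS' => ⟨hS', v, 2 * ρ + 2, by linarith, ?_⟩⟩
  intro S'' hS'' h'
  exact h S'' hS'' (hSS'.trans' hρ (by linarith) (by linarith) h')

lemma nearOrbit_dense {n : ℕ} (hn : n ≠ 0) {ε δ m : ℝ} (hδ : 0 < δ) (hεδ : δ ≤ ε) (hm : 1 ≤ m)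
    {C : Set (EuclideanSpace ℝ (Fin n))} (hC : C ∈ Del n ε δ) :
    IsDenseInDel n ε δ (nearOrbit n ε δ m C) := by
  intro S hS r hr
  have : NeZero n := ⟨hn⟩
  have : Nontrivial (EuclideanSpace ℝ (Fin n)) := by
    refine ⟨EuclideanSpace.single 0 1, 0, ?_⟩
    intro h
    have := congrArg (fun x : EuclideanSpace ℝ (Fin n) => x 0) h
    simp at this
  obtain ⟨v, hv⟩ := NormedSpace.exists_lt_norm ℝ (EuclideanSpace ℝ (Fin n))
    (2 * (r + 2 * m + ε) + δ)
  obtain ⟨T, hT, -, hTA⟩ := patch hδ hεδ (⊥ : AddSubgroup (EuclideanSpace ℝ (Fin n)))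
    (fun l hl h => absurd (AddSubgroup.mem_bot.1 hl) h)
    (fun b : Bool => if b then v else 0) (fun b : Bool => if b then C else S)
    (by intro b; cases b <;> simp [hS, hC]) (r + 2 * m + ε)
    (by
      intro i j hij
      cases i <;> cases j <;> simp at hij ⊢ <;> linarith)
    (by
      intro l hl i
      rw [AddSubgroup.mem_bot] at hl
      exact ⟨i, by simp [hl], rfl⟩)
  refine ⟨T, ⟨hT, v, 2 * m + ‖v‖, by linarith [norm_nonneg v], ?_⟩, ?_⟩
  · intro S' hS' h
    have h1 : Nrel n (2 * m) (tr v T) (tr v S') := h.tr' (by linarith) v le_rfl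
    have h2 : Nrel n (2 * m) (tr v T) C := by
      apply nrel_of_agree (by linarith)
      intro x hx
      rw [mem_tr]
      have := hTA true x (by linarith)
      simpa using this
    exact h1.symm'.trans' (by linarith) le_rfl (by linarith) h2
  · apply nrel_of_agree hr
    intro x hx
    have := hTA false x (by linarith)
    simpa using this.symm


/-- Being almost chaotic is generic in `Del_{ε,δ}` for `ε ≥ δ > 0`. -/
theorem almostChaotic_generic (n : ℕ) (ε δ : ℝ) (hδ : 0 < δ) (hεδ : δ ≤ ε) :
    ∃ F : ℕ → Set (Set (EuclideanSpace ℝ (Fin n))),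
      (∀ k, F k ⊆ Del n ε δ ∧ IsOpenInDel n ε δ (F k) ∧ IsDenseInDel n ε δ (F k)) ∧
      ∀ S, (∀ k, S ∈ F k) → S ∈ Del n ε δ ∧ IsAlmostChaotic ε δ S := by
  have hdel : Del n ε δ ⊆ Del n ε δ ∧ IsOpenInDel n ε δ (Del n ε δ) ∧
      IsDenseInDel n ε δ (Del n ε δ) :=
    ⟨subset_rfl, fun S hS => ⟨1, one_pos, fun S' hS' _ => hS'⟩,
      fun S hS r hr => ⟨S, hS, nrel_refl hr S⟩⟩
  by_cases hn : n = 0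
  · subst hn
    refine ⟨fun _ => Del 0 ε δ, fun _ => hdel, fun S hS => ⟨hS 0, ?_⟩⟩
    intro S' hS' hh r hr
    exact ⟨S', hS', ⟨fun i => i.elim0, linearIndependent_empty_type, fun i => i.elim0⟩, hh,
      nrel_refl hr S'⟩
  have hnet : ∀ m : ℕ, ∃ C ⊆ Del n ε δ, C.Finite ∧ ∀ P ∈ Del n ε δ, ∃ P' ∈ C,
      Nrel n ((m : ℝ) + 2) P' P := fun m => finite_net _ (by positivity)
  choose C hCD hCfin hC using hnet
  have hcount : (insert (Del n ε δ)
      (⋃ m : ℕ, (fun c => nearOrbit n ε δ ((m : ℝ) + 2) c) '' C m)).Countable :=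
    (Set.countable_iUnion fun m => ((hCfin m).image _).countable).insert _
  obtain ⟨F, hF⟩ := hcount.exists_eq_range (Set.insert_nonempty _ _)
  refine ⟨F, ?_, ?_⟩
  · intro k
    have hk : F k ∈ Set.range F := ⟨k, rfl⟩
    rw [← hF] at hk
    rcases hk with hk | hk
    · rw [hk]; exact hdel
    · simp only [Set.mem_iUnion] at hk
      obtain ⟨m, c, hc, hk⟩ := hk
      rw [← hk]
      exact ⟨fun S hS => hS.1, nearOrbit_open _ _ _ _ _,
        nearOrbit_dense hn hδ hεδ (by linarith [(Nat.cast_nonneg m : (0 : ℝ) ≤ m)])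
          (hCD m hc)⟩
  · intro S hS
    have hall : ∀ G ∈ (insert (Del n ε δ)
        (⋃ m : ℕ, (fun c => nearOrbit n ε δ ((m : ℝ) + 2) c) '' C m)), S ∈ G := by
      intro G hG
      rw [hF] at hG
      obtain ⟨k, rfl⟩ := hG
      exact hS k
    have hSD : S ∈ Del n ε δ := hall _ (Set.mem_insert _ _)
    have hhull : ∀ P ∈ Del n ε δ, InHull S P := by
      intro P hP r hr
      obtain ⟨m, hm⟩ := exists_nat_ge (2 * r)
      obtain ⟨c, hc, hcP⟩ := hC m P hP
      obtain ⟨-, v, ρ, hρ, h⟩ := hall (nearOrbit n ε δ ((m : ℝ) + 2) c)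
        (Or.inr (Set.mem_iUnion.2 ⟨m, c, hc, rfl⟩))
      exact ⟨v, (h S hSD (nrel_refl hρ S)).trans' hr (by linarith) (by linarith) hcP⟩
    refine ⟨hSD, ?_⟩
    intro S' hS' _ r hr
    obtain ⟨P, hP, hper, hnear⟩ := periodic_dense hδ hεδ hS' hr
    exact ⟨P, hP, hper, hhull P hP, hnear⟩
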